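/- Separate strict monotonicity of the second equation: define Eq₂(φ, β₁) = −β₁·c + λ·φ·(1 − 1/V) + Σ_{(x,p) : 1 ≤ p, 2p ≤ x ≤ 56} p·κ̃_{x,p} · ((V − 1)/(V·(V^p − 1))) · (1 − 1/(1 + (U/V)^{x−2p}·(1 − V^{−p}))), where U = U(φ, β₁) and V = V(φ, β₁). Then for all (φ, β₁) and (φ, β₁′) in D with β₁ < β₁′, Eq₂(φ, β₁) > Eq₂(φ, β₁′); and for all (φ, β₁) and (φ′, β₁) in D with φ < φ′, Eq₂(φ, β₁) > Eq₂(φ′, β₁). -/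

import Mathlib

/-- `U(φ, β₁) = 9(1−φ)β₃/(Y β₂)` where `β₂ = 3(1−φ) − 2β₁`, `β₃ = β₁ − 2 + 3φ`,
`Y = 3φ − β₁`. -/
noncomputable def Ufun (φ β₁ : ℝ) : ℝ :=
  9 * (1 - φ) * (β₁ - 2 + 3 * φ) / ((3 * φ - β₁) * (3 * (1 - φ) - 2 * β₁))

/-- `V(φ, β₁) = 1 + β₂²/(3 Y β₃)`. -/
noncomputable def Vfun (φ β₁ : ℝ) : ℝ :=
  1 + (3 * (1 - φ) - 2 * β₁) ^ 2 / (3 * (3 * φ - β₁) * (β₁ - 2 + 3 * φ))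

/-- The constraint polygon `D` for the pair `(φ, β₁)`. -/
def Dset : Set (ℝ × ℝ) :=
  {q | 0.525245 ≤ q.1 ∧ q.1 ≤ 0.619063 ∧ 0.33018 ≤ q.2 ∧ q.2 ≤ 0.52891 ∧
    0.33018 ≤ 3 * (1 - q.1) - 2 * q.2 ∧ 3 * (1 - q.1) - 2 * q.2 ≤ 0.52891 ∧
    0.077639 ≤ q.2 - 2 + 3 * q.1 ∧ q.2 - 2 + 3 * q.1 ≤ 0.21782}

/-- `κ_{x,p}` for `λ = 3·4.506 = 13.518`. -/
noncomputable def kappa (x p : ℕ) : ℝ :=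
  (2 : ℝ) ^ (-(x : ℝ)) * (Nat.choose x p : ℝ) *
    (Real.exp (-(13.518 : ℝ)) * (13.518 : ℝ) ^ x / (Nat.factorial x : ℝ))

/-- `κ̃_{x,p}`: `2κ_{x,p}` if `x > 2p`, `κ_{x,p}` if `x = 2p`, `0` if `x < 2p`. -/
noncomputable def kappaT (x p : ℕ) : ℝ :=
  if x < 2 * p then 0 else if 2 * p < x then 2 * kappa x p else kappa x p

/-- The second equation `Eq₂` (with `c = 4.506`, `λ = 13.518`, `x_max = 56`). -/
noncomputable def Eq2 (φ β₁ : ℝ) : ℝ :=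
  -β₁ * 4.506 + 13.518 * φ * (1 - 1 / Vfun φ β₁) +
    ∑ x ∈ Finset.range 57, ∑ p ∈ Finset.range (x + 1),
      if 1 ≤ p ∧ 2 * p ≤ x then
        (p : ℝ) * kappaT x p *
          ((Vfun φ β₁ - 1) / (Vfun φ β₁ * ((Vfun φ β₁) ^ p - 1))) *
          (1 - 1 / (1 + (Ufun φ β₁ / Vfun φ β₁) ^ (x - 2 * p) *
            (1 - (Vfun φ β₁) ^ (-(p : ℤ)))))
      else 0


noncomputable def gr : ℕ → ℝ → ℝ
  | 0, w => w
  | (k + 1), w => w * gr k w / (1 + gr k w)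

theorem gr_pos (k : ℕ) {w : ℝ} (hw : 0 < w) : 0 < gr k w := by
  induction k with
  | zero => simpa [gr] using hw
  | succ k ih => simp only [gr]; positivity

theorem gr_one (k : ℕ) : gr k 1 = 1 / ((k : ℝ) + 1) := by
  induction k with
  | zero => simp [gr]
  | succ k ih =>
    simp only [gr, ih]
    have : (0 : ℝ) < (k : ℝ) + 1 := by positivity
    have h2 : (0 : ℝ) < (k : ℝ) + 1 + 1 := by positivity
    push_cast
    field_simp

theorem gr_mono (k : ℕ) {w w' : ℝ} (hw : 0 < w) (h : w ≤ w') : gr k w ≤ gr k w' := by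
  induction k with
  | zero => simpa [gr] using h
  | succ k ih =>
    simp only [gr]
    have h1 := gr_pos k hw
    have h2 := gr_pos k (lt_of_lt_of_le hw h)
    rw [div_le_div_iff₀ (by positivity) (by positivity)]
    have h3 : w * gr k w ≤ w' * gr k w' := mul_le_mul h ih h1.le (by linarith)
    have h4 : w * (gr k w * gr k w') ≤ w' * (gr k w * gr k w') :=
      mul_le_mul_of_nonneg_right h (by positivity)
    nlinarith

theorem gr_closed (k : ℕ) {w : ℝ} (hw : 0 < w) (hw1 : w < 1) :
    gr k w = (1 - w) * w ^ (k + 1) / (1 - w ^ (k + 1)) := by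
  induction k with
  | zero =>
    have : 1 - w ≠ 0 := by linarith
    simp only [gr, zero_add, pow_one]; field_simp
  | succ k ih =>
    have h1 : w ^ (k + 1) < 1 := pow_lt_one₀ hw.le hw1 (by omega)
    have h2 : w ^ (k + 1 + 1) < 1 := pow_lt_one₀ hw.le hw1 (by omega)
    have h3 : 0 < w ^ (k + 1) := by positivity
    have e : w ^ (k + 1 + 1) = w ^ (k + 1) * w := pow_succ _ _
    simp only [gr, ih]
    rw [e] at h2 ⊢
    generalize w ^ (k + 1) = t at *
    have h4 : 1 - t ≠ 0 := by linarith
    have h5 : 1 - t * w ≠ 0 := by linarith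
    have h6 : 1 + (1 - w) * t / (1 - t) = (1 - t * w) / (1 - t) := by
      field_simp; ring
    rw [h6]
    field_simp

theorem gr_lip (k : ℕ) : ∀ {w w' : ℝ}, 0 < w → w ≤ w' → w' ≤ 1 →
    gr k w' - gr k w ≤ ((k : ℝ) + 2) / (2 * ((k : ℝ) + 1)) * (w' - w) := by
  induction k with
  | zero => intro w w' _ _ _; simp [gr]
  | succ k ih =>
    intro w w' hw h h1
    have hg := gr_pos k hw
    have hg' := gr_pos k (lt_of_lt_of_le hw h)
    have hm := gr_mono k hw h
    have hu := gr_mono k (lt_of_lt_of_le hw h) h1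
    have ht := ih hw (h.trans h1) le_rfl
    have hl := ih hw h h1
    rw [gr_one] at hu ht
    have hk : (0 : ℝ) < (k : ℝ) + 1 := by positivity
    have hk2 : (0 : ℝ) < (k : ℝ) + 2 := by positivity
    simp only [gr]
    push_cast
    generalize (k : ℝ) = K at *
    generalize gr k w = g at *
    generalize gr k w' = g' at *
    have e : w' * g' / (1 + g') - w * g / (1 + g) =
        (w' - w) * (g' / (1 + g')) + (w / ((1 + g) * (1 + g'))) * (g' - g) := by
      field_simp; ring
    have b1 : g' / (1 + g') ≤ 1 / (K + 2) := by
      rw [div_le_div_iff₀ (by positivity) (by positivity)]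
      have := (le_div_iff₀ hk).1 hu
      nlinarith
    have b0 : (K + 2) * (1 + w) / (2 * (K + 1)) ≤ 1 + g := by
      have : (K + 2) * (1 + w) / (2 * (K + 1)) =
        1 + 1 / (K + 1) - (K + 2) / (2 * (K + 1)) * (1 - w) := by field_simp; ring
      linarith
    have b2 : w / ((1 + g) * (1 + g')) ≤ ((K + 1) / (K + 2)) ^ 2 := by
      rw [div_pow, div_le_div_iff₀ (by positivity) (by positivity)]
      have c0 := (div_le_iff₀ (by positivity)).1 b0
      have c1 : ((K + 2) * (1 + w)) ^ 2 ≤ ((1 + g) * (2 * (K + 1))) ^ 2 :=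
        pow_le_pow_left₀ (by positivity) c0 2
      have c2 : (1 + g) ^ 2 ≤ (1 + g) * (1 + g') := by nlinarith
      have c3 : (K + 1) ^ 2 * (1 + g) ^ 2 ≤ (K + 1) ^ 2 * ((1 + g) * (1 + g')) :=
        mul_le_mul_of_nonneg_left c2 (by positivity)
      have c4 : 0 ≤ (K + 2) ^ 2 * (1 - w) ^ 2 := by positivity
      nlinarith
    have b3 := mul_le_mul b2 hl (by linarith) (by positivity)
    have b4 := mul_le_mul_of_nonneg_left b1 (sub_nonneg.2 h)
    have e2 : (K + 1 + 2) / (2 * (K + 1 + 1)) * (w' - w) =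
        (w' - w) * (1 / (K + 2)) + ((K + 1) / (K + 2)) ^ 2 * ((K + 2) / (2 * (K + 1)) * (w' - w)) := by
      have : K + 1 + 1 = K + 2 := by ring
      rw [this]; field_simp; ring
    rw [e, e2]; linarith

theorem log_ge {v : ℝ} (hv : 1 ≤ v) : 2 * (v - 1) / (v + 1) ≤ Real.log v := by
  have hm : MonotoneOn (fun v : ℝ => Real.log v - 2 * (v - 1) / (v + 1)) (Set.Ici 1) := by
    have hd : ∀ v : ℝ, 1 ≤ v → HasDerivAt (fun v : ℝ => Real.log v - 2 * (v - 1) / (v + 1))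
        (v⁻¹ - (2 * (v + 1) - 2 * (v - 1) * 1) / (v + 1) ^ 2) v := by
      intro v hv
      have h1 : HasDerivAt (fun v : ℝ => 2 * (v - 1)) 2 v := by
        simpa using ((hasDerivAt_id v).sub_const 1).const_mul 2
      have h2 : HasDerivAt (fun v : ℝ => v + 1) 1 v := (hasDerivAt_id v).add_const 1
      exact (Real.hasDerivAt_log (by positivity)).sub (h1.div h2 (by positivity))
    apply monotoneOn_of_deriv_nonneg (convex_Ici 1)
    · exact fun v hv => (hd v hv).continuousAt.continuousWithinAt
    · intro v hv
      rw [interior_Ici] at hv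
      exact (hd v (le_of_lt hv)).differentiableAt.differentiableWithinAt
    · intro v hv
      rw [interior_Ici] at hv
      have hv' : 1 ≤ v := le_of_lt hv
      rw [(hd v hv').deriv]
      have : v⁻¹ - (2 * (v + 1) - 2 * (v - 1) * 1) / (v + 1) ^ 2 =
        (v - 1) ^ 2 / (v * (v + 1) ^ 2) := by field_simp; ring
      rw [this]; positivity
  have := hm (Set.mem_Ici.2 le_rfl) (Set.mem_Ici.2 hv) hv
  simp at this
  exact this

theorem logistic {x x' : ℝ} (hx : 0 < x) (h : x ≤ x') :
    x' / (1 + x') - x / (1 + x) ≤ 1 / 4 * Real.log (x' / x) := by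
  obtain ⟨v, hv, hxv⟩ : ∃ v : ℝ, 1 ≤ v ∧ x' = x * v ^ 2 := by
    refine ⟨√(x' / x), ?_, ?_⟩
    · rw [Real.one_le_sqrt, le_div_iff₀ hx]; linarith
    · rw [Real.sq_sqrt (by have := hx.trans_le h; positivity)]; field_simp
  have h1 : x' / x = v ^ 2 := by rw [hxv]; field_simp
  rw [h1, Real.log_pow, hxv]
  have h2 := log_ge hv
  have h3 : x * v ^ 2 / (1 + x * v ^ 2) - x / (1 + x) ≤ (v - 1) / (v + 1) := by
    have e : x * v ^ 2 / (1 + x * v ^ 2) - x / (1 + x) =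
      (x * (v - 1) * (v + 1)) / ((1 + x * v ^ 2) * (1 + x)) := by field_simp; ring
    rw [e, div_le_div_iff₀ (by positivity) (by positivity)]
    have : 0 ≤ (v - 1) * (x * v - 1) ^ 2 := mul_nonneg (by linarith) (by positivity)
    nlinarith
  have h4 : 2 * (v - 1) / (v + 1) = 2 * ((v - 1) / (v + 1)) := by ring
  push_cast
  linarith

/-- The term in the variables `R = U/V`, `w = 1/V`. -/
noncomputable def TT (k n : ℕ) (R w : ℝ) : ℝ :=
  gr k w * (R ^ n * (1 - w ^ (k + 1)) / (1 + R ^ n * (1 - w ^ (k + 1))))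

theorem TT_incr (k n : ℕ) {R R' w w' : ℝ} (hR : 0 < R) (hRR : R ≤ R') (hw : 0 < w) (hww : w ≤ w')
    (hw' : w' ≤ 8 / 9) :
    TT k n R' w' - TT k n R w ≤ gr k (8 / 9) * ((n : ℝ) / 4) * Real.log (R' / R) +
      ((k : ℝ) + 2) / (2 * ((k : ℝ) + 1)) * (w' - w) := by
  have hw0' : 0 < w' := hw.trans_le hww
  have hR' : 0 < R' := hR.trans_le hRR
  have q1 : w ^ (k + 1) ≤ w' ^ (k + 1) := pow_le_pow_left₀ hw.le hww _
  have q2 : w' ^ (k + 1) < 1 := pow_lt_one₀ hw0'.le (by linarith) (by omega)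
  have hZ : 0 < R ^ n := by positivity
  have hZ' : R ^ n ≤ R' ^ n := pow_le_pow_left₀ hR.le hRR _
  have l1 := logistic (x := R ^ n * (1 - w' ^ (k + 1))) (x' := R' ^ n * (1 - w' ^ (k + 1)))
    (mul_pos hZ (by linarith)) (mul_le_mul_of_nonneg_right hZ' (by linarith))
  have l2 : R' ^ n * (1 - w' ^ (k + 1)) / (R ^ n * (1 - w' ^ (k + 1))) = (R' / R) ^ n := by
    rw [mul_div_mul_right _ _ (by linarith), div_pow]
  rw [l2, Real.log_pow] at l1
  have hlog : 0 ≤ Real.log (R' / R) := Real.log_nonneg (by rw [le_div_iff₀ hR]; linarith)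
  have g0 := gr_pos k hw0'
  have gw := gr_pos k hw
  have g1 := gr_mono k hw0' hw'
  have g2 := gr_mono k hw hww
  have g3 := gr_lip k hw hww (by linarith)
  have s1 : R ^ n * (1 - w' ^ (k + 1)) / (1 + R ^ n * (1 - w' ^ (k + 1))) ≤
      R ^ n * (1 - w ^ (k + 1)) / (1 + R ^ n * (1 - w ^ (k + 1))) := by
    have : 0 < R ^ n * (1 - w' ^ (k + 1)) := mul_pos hZ (by linarith)
    have : R ^ n * (1 - w' ^ (k + 1)) ≤ R ^ n * (1 - w ^ (k + 1)) :=
      mul_le_mul_of_nonneg_left (by linarith) hZ.le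
    rw [div_le_div_iff₀ (by linarith) (by linarith)]
    nlinarith
  have s2 : R ^ n * (1 - w ^ (k + 1)) / (1 + R ^ n * (1 - w ^ (k + 1))) ≤ 1 := by
    have : 0 < R ^ n * (1 - w ^ (k + 1)) := mul_pos hZ (by linarith)
    rw [div_le_one (by linarith)]; linarith
  unfold TT
  generalize R' ^ n * (1 - w' ^ (k + 1)) / (1 + R' ^ n * (1 - w' ^ (k + 1))) = A at *
  generalize R ^ n * (1 - w' ^ (k + 1)) / (1 + R ^ n * (1 - w' ^ (k + 1))) = B at *
  generalize R ^ n * (1 - w ^ (k + 1)) / (1 + R ^ n * (1 - w ^ (k + 1))) = C at *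
  have m1 : gr k w' * (A - B) ≤ gr k w' * (1 / 4 * (n * Real.log (R' / R))) :=
    mul_le_mul_of_nonneg_left l1 g0.le
  have m2 : gr k w' * (1 / 4 * (n * Real.log (R' / R))) ≤
      gr k (8 / 9) * (1 / 4 * (n * Real.log (R' / R))) :=
    mul_le_mul_of_nonneg_right g1 (by positivity)
  have m3 : gr k w' * B ≤ gr k w' * C := mul_le_mul_of_nonneg_left s1 g0.le
  have m4 : (gr k w' - gr k w) * C ≤ (gr k w' - gr k w) * 1 :=
    mul_le_mul_of_nonneg_left s2 (by linarith)
  nlinarith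

def qk (x p : ℕ) : ℚ :=
  (if 2 * p < x then 2 else 1) * (Nat.choose x p : ℚ) * (6759 / 1000) ^ x / (Nat.factorial x : ℚ)

theorem sumB : (∑ x ∈ Finset.range 57, ∑ p ∈ Finset.range (x + 1),
    if 1 ≤ p ∧ 2 * p ≤ x then qk x p * (((p : ℚ) + 1) / 2) else 0) ≤ 32 / 10 * 742000 := by
  decide +kernel

theorem sumA : (∑ x ∈ Finset.range 57, ∑ p ∈ Finset.range (x + 1),
    if 1 ≤ p ∧ 2 * p ≤ x then
      (p : ℚ) * qk x p * ((8 ^ p / (9 ^ p - 8 ^ p) / 9) * (((x - 2 * p : ℕ) : ℚ) / 4)) else 0)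
      ≤ 515 / 1000 * 742000 := by
  decide +kernel

theorem exp_lb : (742000 : ℝ) ≤ Real.exp 13.518 := by
  refine le_trans ?_ (Real.sum_le_exp_of_nonneg (by norm_num) 40)
  norm_num [Finset.sum_range_succ, Nat.factorial]

theorem term_eq (k n : ℕ) {U V : ℝ} (hV : 1 < V) (hU : 0 < U) :
    (V - 1) / (V * (V ^ (k + 1) - 1)) *
      (1 - 1 / (1 + (U / V) ^ n * (1 - V ^ (-((k + 1 : ℕ) : ℤ))))) = TT k n (U / V) V⁻¹ := by
  have h0 : 0 < V := by linarith
  have hw : 0 < V⁻¹ := by positivity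
  have hw1 : V⁻¹ < 1 := inv_lt_one_of_one_lt₀ hV
  unfold TT
  rw [gr_closed k hw hw1, zpow_neg, zpow_natCast, ← inv_pow]
  have hZ : 0 < (U / V) ^ n := by positivity
  generalize (U / V) ^ n = Z at *
  have ht1 : V⁻¹ ^ (k + 1) < 1 := pow_lt_one₀ hw.le hw1 (by omega)
  have ht0 : 0 < V⁻¹ ^ (k + 1) := by positivity
  have e : V ^ (k + 1) = (V⁻¹ ^ (k + 1))⁻¹ := by rw [inv_pow, inv_inv]
  rw [e]
  generalize V⁻¹ ^ (k + 1) = t at *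
  have e1 : (V - 1) / (V * (t⁻¹ - 1)) = (1 - V⁻¹) * t / (1 - t) := by
    have : 1 - t ≠ 0 := by linarith
    have : t⁻¹ - 1 ≠ 0 := by
      rw [show t⁻¹ - 1 = (1 - t) / t by field_simp]; positivity
    field_simp
  have hq : 0 < 1 - t := by linarith
  have h5 : 0 < 1 + Z * (1 - t) := by positivity
  rw [e1, show 1 - 1 / (1 + Z * (1 - t)) = Z * (1 - t) / (1 + Z * (1 - t)) by
    field_simp; ring]

theorem kappaT_eq {x p : ℕ} (h : 2 * p ≤ x) :
    kappaT x p = Real.exp (-(13.518 : ℝ)) * ((qk x p : ℚ) : ℝ) := by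
  have e : (2 : ℝ) ^ (-(x : ℝ)) * (13.518 : ℝ) ^ x = (6759 / 1000) ^ x := by
    rw [Real.rpow_neg (by norm_num), Real.rpow_natCast, ← inv_pow, ← mul_pow]; norm_num
  have e2 : kappa x p = Real.exp (-(13.518 : ℝ)) * ((Nat.choose x p : ℝ) * (6759 / 1000) ^ x /
      (Nat.factorial x : ℝ)) := by
    rw [← e]; unfold kappa; ring
  unfold kappaT qk
  rw [if_neg (by omega), e2]
  split_ifs <;> push_cast <;> ring

theorem qk_nonneg (x p : ℕ) : 0 ≤ qk x p := by
  unfold qk; split_ifs <;> positivity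

/-- The double sum in the variables `R`, `w`. -/
noncomputable def SS (R w : ℝ) : ℝ :=
  ∑ x ∈ Finset.range 57, ∑ p ∈ Finset.range (x + 1),
    if 1 ≤ p ∧ 2 * p ≤ x then (p : ℝ) * kappaT x p * TT (p - 1) (x - 2 * p) R w else 0

theorem Eq2_eq {φ β : ℝ} (hV : 1 < Vfun φ β) (hU : 0 < Ufun φ β) :
    Eq2 φ β = -β * 4.506 + 13.518 * φ * (1 - (Vfun φ β)⁻¹) +
      SS (Ufun φ β / Vfun φ β) (Vfun φ β)⁻¹ := by
  unfold Eq2 SS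
  rw [one_div]
  congr 1
  refine Finset.sum_congr rfl fun x _ => Finset.sum_congr rfl fun p _ => ?_
  split_ifs with h
  · obtain ⟨k, rfl⟩ : ∃ k, p = k + 1 := ⟨p - 1, by omega⟩
    rw [mul_assoc, term_eq k _ hV hU]; rfl
  · rfl

theorem gr_89 (k : ℕ) : gr k (8 / 9) = 8 ^ (k + 1) / (9 ^ (k + 1) - 8 ^ (k + 1)) / 9 := by
  rw [gr_closed k (by norm_num) (by norm_num), div_pow]
  have h : (8 : ℝ) ^ (k + 1) < 9 ^ (k + 1) := pow_lt_pow_left₀ (by norm_num) (by norm_num) (by omega)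
  have h1 : (9 : ℝ) ^ (k + 1) - 8 ^ (k + 1) ≠ 0 := by linarith
  have h2 : (0 : ℝ) < 9 ^ (k + 1) := by positivity
  generalize (9 : ℝ) ^ (k + 1) = A at *
  generalize (8 : ℝ) ^ (k + 1) = B at *
  rw [show 1 - B / A = (A - B) / A by field_simp]
  field_simp
  norm_num

theorem SS_incr {R R' w w' : ℝ} (hR : 0 < R) (hRR : R ≤ R') (hw : 0 < w) (hww : w ≤ w')
    (hw' : w' ≤ 8 / 9) :
    SS R' w' - SS R w ≤ 0.515 * Real.log (R' / R) + 3.2 * (w' - w) := by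
  have hlog : 0 ≤ Real.log (R' / R) := Real.log_nonneg (by rw [le_div_iff₀ hR]; linarith)
  set ℓ := Real.log (R' / R) with hℓ
  set E := Real.exp (-(13.518 : ℝ)) with hE
  have hEpos : 0 < E := Real.exp_pos _
  have hE1 : E * 742000 ≤ 1 := by
    have := mul_le_mul_of_nonneg_left exp_lb hEpos.le
    rwa [hE, ← Real.exp_add, neg_add_cancel, Real.exp_zero] at this
  have sA : (((∑ x ∈ Finset.range 57, ∑ p ∈ Finset.range (x + 1),
    if 1 ≤ p ∧ 2 * p ≤ x then
      (p : ℚ) * qk x p * ((8 ^ p / (9 ^ p - 8 ^ p) / 9) * (((x - 2 * p : ℕ) : ℚ) / 4)) else 0 : ℚ)) : ℝ)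
      ≤ ((515 / 1000 * 742000 : ℚ) : ℝ) := Rat.cast_le.2 sumA
  have sB : (((∑ x ∈ Finset.range 57, ∑ p ∈ Finset.range (x + 1),
    if 1 ≤ p ∧ 2 * p ≤ x then qk x p * (((p : ℚ) + 1) / 2) else 0 : ℚ)) : ℝ)
      ≤ ((32 / 10 * 742000 : ℚ) : ℝ) := Rat.cast_le.2 sumB
  set QA := ∑ x ∈ Finset.range 57, ∑ p ∈ Finset.range (x + 1),
    if 1 ≤ p ∧ 2 * p ≤ x then
      (p : ℚ) * qk x p * ((8 ^ p / (9 ^ p - 8 ^ p) / 9) * (((x - 2 * p : ℕ) : ℚ) / 4)) else 0 with hQA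
  set QB := ∑ x ∈ Finset.range 57, ∑ p ∈ Finset.range (x + 1),
    if 1 ≤ p ∧ 2 * p ≤ x then qk x p * (((p : ℚ) + 1) / 2) else 0 with hQB
  have key : SS R' w' - SS R w ≤ E * ℓ * (QA : ℝ) + E * (w' - w) * (QB : ℝ) := by
    rw [hQA, hQB]
    unfold SS
    rw [Rat.cast_sum, Rat.cast_sum, Finset.mul_sum, Finset.mul_sum, ← Finset.sum_add_distrib,
      ← Finset.sum_sub_distrib]
    refine Finset.sum_le_sum fun x _ => ?_
    rw [Rat.cast_sum, Rat.cast_sum, Finset.mul_sum, Finset.mul_sum, ← Finset.sum_add_distrib,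
      ← Finset.sum_sub_distrib]
    refine Finset.sum_le_sum fun p _ => ?_
    split_ifs with h
    · obtain ⟨k, rfl⟩ : ∃ k, p = k + 1 := ⟨p - 1, by omega⟩
      rw [kappaT_eq h.2, Nat.add_sub_cancel]
      have hq : (0 : ℝ) ≤ ((qk x (k + 1) : ℚ) : ℝ) := Rat.cast_nonneg.2 (qk_nonneg _ _)
      have ht := TT_incr k (x - 2 * (k + 1)) hR hRR hw hww hw'
      rw [gr_89] at ht
      have hc : 0 ≤ ((k + 1 : ℕ) : ℝ) * (E * ((qk x (k + 1) : ℚ) : ℝ)) := by positivity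
      have hm := mul_le_mul_of_nonneg_left ht hc
      rw [← mul_sub]
      refine hm.trans (le_of_eq ?_)
      simp only [Rat.cast_mul, Rat.cast_div, Rat.cast_sub, Rat.cast_pow, Rat.cast_add,
        Rat.cast_natCast, Rat.cast_ofNat, Rat.cast_one]
      push_cast
      have : (k : ℝ) + 1 ≠ 0 := by positivity
      have e : ((k : ℝ) + 1) * (((k : ℝ) + 2) / (2 * ((k : ℝ) + 1))) = ((k : ℝ) + 1 + 1) / 2 := by
        field_simp; ring
      linear_combination E * ((qk x (k + 1) : ℚ) : ℝ) * (w' - w) * e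
    · simp
  have h1 : E * ℓ * (QA : ℝ) ≤ E * ℓ * ((515 / 1000 * 742000 : ℚ) : ℝ) :=
    mul_le_mul_of_nonneg_left sA (by positivity)
  have h2 : E * (w' - w) * (QB : ℝ) ≤ E * (w' - w) * ((32 / 10 * 742000 : ℚ) : ℝ) :=
    mul_le_mul_of_nonneg_left sB (mul_nonneg hEpos.le (by linarith))
  push_cast at h1 h2
  have h3 := mul_le_mul_of_nonneg_right hE1 hlog
  have h4 := mul_le_mul_of_nonneg_right hE1 (sub_nonneg.2 hww)
  norm_num
  linarith

theorem Vinv_eq {φ β : ℝ} (hx : 0 < 3 * (1 - φ) - 2 * β) (hy : 0 < β - 2 + 3 * φ) :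
    (Vfun φ β)⁻¹ = 1 - ((3 * (1 - φ) - 2 * β) / (6 * φ - 3 + β)) ^ 2 := by
  unfold Vfun
  obtain ⟨x, hxe⟩ : ∃ x, x = 3 * (1 - φ) - 2 * β := ⟨_, rfl⟩
  obtain ⟨y, hye⟩ : ∃ y, y = β - 2 + 3 * φ := ⟨_, rfl⟩
  have hY : 3 * φ - β = 2 * x + 3 * y := by rw [hxe, hye]; ring
  have hM : 6 * φ - 3 + β = x + 3 * y := by rw [hxe, hye]; ring
  rw [hY, hM, ← hxe, ← hye]
  rw [← hxe] at hx; rw [← hye] at hy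
  rw [show 1 + x ^ 2 / (3 * (2 * x + 3 * y) * y) = (x + 3 * y) ^ 2 / (3 * (2 * x + 3 * y) * y) by
    field_simp; ring]
  field_simp; ring

theorem R_eq {φ β : ℝ} (hx : 0 < 3 * (1 - φ) - 2 * β) (hy : 0 < β - 2 + 3 * φ) :
    Ufun φ β / Vfun φ β = 27 * (1 - φ) * (β - 2 + 3 * φ) ^ 2 /
      ((3 * (1 - φ) - 2 * β) * (6 * φ - 3 + β) ^ 2) := by
  unfold Vfun Ufun
  obtain ⟨x, hxe⟩ : ∃ x, x = 3 * (1 - φ) - 2 * β := ⟨_, rfl⟩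
  obtain ⟨y, hye⟩ : ∃ y, y = β - 2 + 3 * φ := ⟨_, rfl⟩
  have hY : 3 * φ - β = 2 * x + 3 * y := by rw [hxe, hye]; ring
  have hM : 6 * φ - 3 + β = x + 3 * y := by rw [hxe, hye]; ring
  rw [hY, hM, ← hxe, ← hye]
  rw [← hxe] at hx; rw [← hye] at hy
  rw [show 1 + x ^ 2 / (3 * (2 * x + 3 * y) * y) = (x + 3 * y) ^ 2 / (3 * (2 * x + 3 * y) * y) by
    field_simp; ring]
  field_simp; ring

theorem polyQ {x y : ℝ} (hx : 0.33018 ≤ x) (hy : 0 < y) (h1 : 1.5 * y ≤ x) (h2 : x ≤ 6.9 * y) :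
    0 < (4.506 * (1 + x + 2 * y) - 3.2) * 18 * x ^ 2 * y * (x + y)
      - 13.518 * x ^ 3 * y * (x + 3 * y)
      - 0.515 * (6 * x ^ 2 + 9 * x * y + 9 * y ^ 2) * (x + 3 * y) ^ 2 := by
  obtain ⟨u, rfl⟩ : ∃ u, x = (1.5 + u) * y := ⟨x / y - 1.5, by field_simp; ring⟩
  have hu0 : 0 ≤ u := by by_contra hh; push Not at hh; nlinarith
  have hu1 : u ≤ 5.4 := by by_contra hh; push Not at hh; nlinarith
  have hq : 0 < (4.506 * (1.33018 * (1.5 + u) + 0.66036) - 3.2 * (1.5 + u)) * 18 * (1.5 + u) *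
     (2.5 + u) - 13.518 * 0.33018 * (1.5 + u) ^ 2 * (4.5 + u)
     - 0.515 * (6 * (1.5 + u) ^ 2 + 9 * (1.5 + u) + 9) * (4.5 + u) ^ 2 := by
    have : 0 ≤ u ^ 3 * (5.4 - u) := mul_nonneg (by positivity) (by linarith)
    nlinarith [pow_nonneg hu0 2, pow_nonneg hu0 3]
  have hc : 0 ≤ (4.506 * (3.5 + u) * 18 * (1.5 + u) ^ 2 * (2.5 + u)
     - 13.518 * (1.5 + u) ^ 3 * (4.5 + u)) := by
    have : (4.506 * (3.5 + u) * 18 * (1.5 + u) ^ 2 * (2.5 + u)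
     - 13.518 * (1.5 + u) ^ 3 * (4.5 + u)) = 13.518 * (1.5 + u) ^ 2 *
       (6 * (3.5 + u) * (2.5 + u) - (1.5 + u) * (4.5 + u)) := by ring
    rw [this]
    refine mul_nonneg (by positivity) (by nlinarith)
  have hr : 0 < 1.5 + u := by linarith
  have hyr : 0 ≤ (y - 0.33018 / (1.5 + u)) := by
    rw [sub_nonneg, div_le_iff₀ hr]; linarith
  have e : (4.506 * (1 + (1.5 + u) * y + 2 * y) - 3.2) * 18 * ((1.5 + u) * y) ^ 2 * y *
        ((1.5 + u) * y + y)
      - 13.518 * ((1.5 + u) * y) ^ 3 * y * ((1.5 + u) * y + 3 * y)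
      - 0.515 * (6 * ((1.5 + u) * y) ^ 2 + 9 * ((1.5 + u) * y) * y + 9 * y ^ 2) *
        ((1.5 + u) * y + 3 * y) ^ 2 = y ^ 4 * (
     ((4.506 * (1.33018 * (1.5 + u) + 0.66036) - 3.2 * (1.5 + u)) * 18 * (1.5 + u) *
     (2.5 + u) - 13.518 * 0.33018 * (1.5 + u) ^ 2 * (4.5 + u)
     - 0.515 * (6 * (1.5 + u) ^ 2 + 9 * (1.5 + u) + 9) * (4.5 + u) ^ 2) +
     (y - 0.33018 / (1.5 + u)) * (4.506 * (3.5 + u) * 18 * (1.5 + u) ^ 2 * (2.5 + u)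
     - 13.518 * (1.5 + u) ^ 3 * (4.5 + u))) := by field_simp; ring
  rw [e]
  have := mul_nonneg hyr hc
  positivity

theorem polyQb {x y : ℝ} (hx : 0.33018 ≤ x) (hy : 0 < y) (h1 : 1.5 * y ≤ x) (h2 : x ≤ 6.9 * y) :
    0 < 4.506 * (x + 3 * y) ^ 3 * x * y
      + (4.506 * (1 + x + 2 * y) - 3.2) * 6 * x ^ 2 * y * (x + 2 * y)
      - 0.515 * 2 * (x ^ 2 + 3 * x * y + 3 * y ^ 2) * (x + 3 * y) ^ 2 := by
  obtain ⟨u, rfl⟩ : ∃ u, x = (1.5 + u) * y := ⟨x / y - 1.5, by field_simp; ring⟩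
  have hu0 : 0 ≤ u := by by_contra hh; push Not at hh; nlinarith
  have hu1 : u ≤ 5.4 := by by_contra hh; push Not at hh; nlinarith
  have hq : 0 < 4.506 * 0.33018 * (4.5 + u) ^ 3 +
     (4.506 * (1.33018 * (1.5 + u) + 0.66036) - 3.2 * (1.5 + u)) * 6 * (1.5 + u) *
     (3.5 + u)
     - 0.515 * 2 * ((1.5 + u) ^ 2 + 3 * (1.5 + u) + 3) * (4.5 + u) ^ 2 := by
    have : 0 ≤ u ^ 3 * (5.4 - u) := mul_nonneg (by positivity) (by linarith)
    nlinarith [pow_nonneg hu0 2, pow_nonneg hu0 3]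
  have hr : 0 < 1.5 + u := by linarith
  have hyr : 0 ≤ (y - 0.33018 / (1.5 + u)) := by
    rw [sub_nonneg, div_le_iff₀ hr]; linarith
  have hc : 0 ≤ 4.506 * (4.5 + u) ^ 3 * (1.5 + u) +
      4.506 * (3.5 + u) * 6 * (1.5 + u) ^ 2 * (3.5 + u) := by positivity
  have e : 4.506 * ((1.5 + u) * y + 3 * y) ^ 3 * ((1.5 + u) * y) * y
      + (4.506 * (1 + (1.5 + u) * y + 2 * y) - 3.2) * 6 * ((1.5 + u) * y) ^ 2 * y *
        ((1.5 + u) * y + 2 * y)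
      - 0.515 * 2 * (((1.5 + u) * y) ^ 2 + 3 * ((1.5 + u) * y) * y + 3 * y ^ 2) *
        ((1.5 + u) * y + 3 * y) ^ 2 = y ^ 4 * ((4.506 * 0.33018 * (4.5 + u) ^ 3 +
     (4.506 * (1.33018 * (1.5 + u) + 0.66036) - 3.2 * (1.5 + u)) * 6 * (1.5 + u) *
     (3.5 + u)
     - 0.515 * 2 * ((1.5 + u) ^ 2 + 3 * (1.5 + u) + 3) * (4.5 + u) ^ 2) +
     (y - 0.33018 / (1.5 + u)) * (4.506 * (4.5 + u) ^ 3 * (1.5 + u) +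
      4.506 * (3.5 + u) * 6 * (1.5 + u) ^ 2 * (3.5 + u))) := by field_simp; ring
  rw [e]
  have := mul_nonneg hyr hc
  positivity

/-- Comparison function. -/
noncomputable def Psi (φ β : ℝ) : ℝ :=
  -β * 4.506 + (13.518 * φ - 3.2) * ((3 * (1 - φ) - 2 * β) / (6 * φ - 3 + β)) ^ 2 +
    0.515 * (Real.log (1 - φ) + 2 * Real.log (β - 2 + 3 * φ) - Real.log (3 * (1 - φ) - 2 * β)
      - 2 * Real.log (6 * φ - 3 + β))

theorem log_R {φ β : ℝ} (h1 : 0 < 1 - φ) (hx : 0 < 3 * (1 - φ) - 2 * β) (hy : 0 < β - 2 + 3 * φ)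
    (hM : 0 < 6 * φ - 3 + β) :
    Real.log (27 * (1 - φ) * (β - 2 + 3 * φ) ^ 2 /
      ((3 * (1 - φ) - 2 * β) * (6 * φ - 3 + β) ^ 2)) =
    Real.log 27 + (Real.log (1 - φ) + 2 * Real.log (β - 2 + 3 * φ)
      - Real.log (3 * (1 - φ) - 2 * β) - 2 * Real.log (6 * φ - 3 + β)) := by
  rw [Real.log_div (by positivity) (by positivity), Real.log_mul (by positivity) (by positivity),
    Real.log_mul (by positivity) (by positivity), Real.log_mul (by positivity) (by positivity),
    Real.log_pow, Real.log_pow]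
  push_cast; ring

set_option maxHeartbeats 1000000 in
theorem reduce {φ β φ' β' : ℝ} (h : (φ, β) ∈ Dset) (h' : (φ', β') ∈ Dset) (hφ : φ ≤ φ')
    (hβ : β ≤ β') (hR : (1 - φ) * (3 * (1 - φ') - 2 * β') ≤ (1 - φ') * (3 * (1 - φ) - 2 * β))
    (hP : Psi φ' β' < Psi φ β) :
    Eq2 φ' β' < Eq2 φ β := by
  obtain ⟨a1, a2, a3, a4, a5, a6, a7, a8⟩ := h
  obtain ⟨b1, b2, b3, b4, b5, b6, b7, b8⟩ := h'
  simp only at a1 a2 a3 a4 a5 a6 a7 a8 b1 b2 b3 b4 b5 b6 b7 b8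
  norm_num at a1 a2 a3 a4 a5 a6 a7 a8 b1 b2 b3 b4 b5 b6 b7 b8
  have hx : 0 < 3 * (1 - φ) - 2 * β := by linarith
  have hy : 0 < β - 2 + 3 * φ := by linarith
  have hM : 0 < 6 * φ - 3 + β := by linarith
  have hx' : 0 < 3 * (1 - φ') - 2 * β' := by linarith
  have hy' : 0 < β' - 2 + 3 * φ' := by linarith
  have hM' : 0 < 6 * φ' - 3 + β' := by linarith
  have h1 : 0 < 1 - φ := by linarith
  have h1' : 0 < 1 - φ' := by linarith
  have hV : ∀ φ β : ℝ, 0 < 3 * (1 - φ) - 2 * β → 0 < β - 2 + 3 * φ → 1 < Vfun φ β := by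
    intro φ β hx hy
    have : 0 < 3 * φ - β := by linarith
    unfold Vfun
    have : 0 < (3 * (1 - φ) - 2 * β) ^ 2 / (3 * (3 * φ - β) * (β - 2 + 3 * φ)) := by positivity
    linarith
  have hU : ∀ φ β : ℝ, 0 < 1 - φ → 0 < 3 * (1 - φ) - 2 * β → 0 < β - 2 + 3 * φ →
      0 < Ufun φ β := by
    intro φ β h1 hx hy
    have : 0 < 3 * φ - β := by linarith
    unfold Ufun
    positivity
  rw [Eq2_eq (hV _ _ hx hy) (hU _ _ h1 hx hy), Eq2_eq (hV _ _ hx' hy') (hU _ _ h1' hx' hy')]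
  rw [Vinv_eq hx hy, Vinv_eq hx' hy', R_eq hx hy, R_eq hx' hy']
  have l1 := log_R h1 hx hy hM
  have l2 := log_R h1' hx' hy' hM'
  have hs' : 0 < (3 * (1 - φ') - 2 * β') / (6 * φ' - 3 + β') := by positivity
  have hss : (3 * (1 - φ') - 2 * β') / (6 * φ' - 3 + β') ≤
      (3 * (1 - φ) - 2 * β) / (6 * φ - 3 + β) :=
    div_le_div₀ hx.le (by linarith) hM (by linarith)
  have hs1 : (3 * (1 - φ) - 2 * β) / (6 * φ - 3 + β) < 1 := by
    rw [div_lt_one hM]; linarith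
  have hs2 : 1 / 3 ≤ (3 * (1 - φ') - 2 * β') / (6 * φ' - 3 + β') := by
    rw [div_le_div_iff₀ (by norm_num) hM']; linarith
  have hyM : (β - 2 + 3 * φ) / (6 * φ - 3 + β) ≤ (β' - 2 + 3 * φ') / (6 * φ' - 3 + β') := by
    have e : ∀ φ β : ℝ, 0 < 6 * φ - 3 + β → (β - 2 + 3 * φ) / (6 * φ - 3 + β) =
        (1 - (3 * (1 - φ) - 2 * β) / (6 * φ - 3 + β)) / 3 := by
      intro φ β hM
      rw [show β - 2 + 3 * φ = ((6 * φ - 3 + β) - (3 * (1 - φ) - 2 * β)) / 3 by ring,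
        div_right_comm, sub_div, div_self hM.ne']
    rw [e _ _ hM, e _ _ hM']; linarith
  have hRR : 27 * (1 - φ) * (β - 2 + 3 * φ) ^ 2 / ((3 * (1 - φ) - 2 * β) * (6 * φ - 3 + β) ^ 2) ≤
      27 * (1 - φ') * (β' - 2 + 3 * φ') ^ 2 /
        ((3 * (1 - φ') - 2 * β') * (6 * φ' - 3 + β') ^ 2) := by
    have e : ∀ φ β : ℝ, 27 * (1 - φ) * (β - 2 + 3 * φ) ^ 2 /
        ((3 * (1 - φ) - 2 * β) * (6 * φ - 3 + β) ^ 2) = 27 * ((1 - φ) / (3 * (1 - φ) - 2 * β)) *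
        ((β - 2 + 3 * φ) / (6 * φ - 3 + β)) ^ 2 := by
      intro φ β; rw [div_pow, mul_div_assoc' 27, div_mul_div_comm]
    rw [e, e]
    have c1 : (1 - φ) / (3 * (1 - φ) - 2 * β) ≤ (1 - φ') / (3 * (1 - φ') - 2 * β') := by
      rw [div_le_div_iff₀ hx hx']; exact hR
    gcongr
  have hRpos : 0 < 27 * (1 - φ) * (β - 2 + 3 * φ) ^ 2 /
      ((3 * (1 - φ) - 2 * β) * (6 * φ - 3 + β) ^ 2) := by positivity
  unfold Psi at hP
  generalize (3 * (1 - φ') - 2 * β') / (6 * φ' - 3 + β') = s' at *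
  generalize (3 * (1 - φ) - 2 * β) / (6 * φ - 3 + β) = s at *
  have hi := SS_incr hRpos hRR (w := 1 - s ^ 2) (w' := 1 - s' ^ 2) (by nlinarith) (by nlinarith)
    (by nlinarith)
  rw [Real.log_div (hRpos.trans_le hRR).ne' hRpos.ne', l1, l2] at hi
  linarith

theorem Psi_phi {φ φ' β : ℝ} (h : (φ, β) ∈ Dset) (h' : (φ', β) ∈ Dset) (hφ : φ < φ') :
    Psi φ' β < Psi φ β := by
  obtain ⟨a1, a2, a3, a4, a5, a6, a7, a8⟩ := h
  obtain ⟨b1, b2, b3, b4, b5, b6, b7, b8⟩ := h'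
  simp only at a1 a2 a3 a4 a5 a6 a7 a8 b1 b2 b3 b4 b5 b6 b7 b8
  norm_num at a1 a2 a3 a4 a5 a6 a7 a8 b1 b2 b3 b4 b5 b6 b7 b8
  have hd : ∀ t ∈ Set.Icc φ φ', ∃ d < 0, HasDerivAt (fun t => Psi t β) d t := by
    intro t ht
    obtain ⟨t1, t2⟩ := ht
    have hx : 0.33018 ≤ 3 * (1 - t) - 2 * β := by norm_num; linarith
    have hx0 : 0 < 3 * (1 - t) - 2 * β := by linarith
    have hy : 0 < β - 2 + 3 * t := by linarith
    have hM : 0 < 6 * t - 3 + β := by linarith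
    have h1 : 0 < 1 - t := by linarith
    have hq := polyQ hx hy (by norm_num; linarith) (by norm_num; linarith)
    have dx : HasDerivAt (fun t : ℝ => 3 * (1 - t) - 2 * β) (-3) t := by
      simpa using (((hasDerivAt_id t).const_sub 1).const_mul 3).sub_const (2 * β)
    have dy : HasDerivAt (fun t : ℝ => β - 2 + 3 * t) 3 t := by
      simpa using ((hasDerivAt_id t).const_mul 3).const_add (β - 2)
    have dM : HasDerivAt (fun t : ℝ => 6 * t - 3 + β) 6 t := by
      simpa using (((hasDerivAt_id t).const_mul 6).sub_const 3).add_const β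
    have d1 : HasDerivAt (fun t : ℝ => 1 - t) (-1) t := by
      simpa using (hasDerivAt_id t).const_sub 1
    have dL : HasDerivAt (fun t : ℝ => 13.518 * t - 3.2) 13.518 t := by
      simpa using ((hasDerivAt_id t).const_mul 13.518).sub_const 3.2
    have D := (((dL.mul ((dx.div dM hM.ne').pow 2)).const_add (-β * 4.506))).add
      (((((d1.log h1.ne').add ((dy.log hy.ne').const_mul 2)).sub (dx.log hx0.ne')).sub
        ((dM.log hM.ne').const_mul 2)).const_mul 0.515)
    refine ⟨_, ?_, D⟩
    have hp : 0 < 1 / (1 - t) := by positivity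
    obtain ⟨x, hxe⟩ : ∃ x, x = 3 * (1 - t) - 2 * β := ⟨_, rfl⟩
    obtain ⟨y, hye⟩ : ∃ y, y = β - 2 + 3 * t := ⟨_, rfl⟩
    have hMe : 6 * t - 3 + β = x + 3 * y := by rw [hxe, hye]; ring
    have hte : t = (1 + x + 2 * y) / 3 := by rw [hxe, hye]; ring
    rw [← hxe, ← hye] at hq
    simp only [Pi.div_apply, Pi.pow_apply]
    rw [hMe, ← hxe, ← hye]
    rw [← hxe] at hx0; rw [← hye] at hy
    have hneg : -1 / (1 - t) = -(1 / (1 - t)) := by ring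
    rw [hneg]
    generalize 1 / (1 - t) = z at *
    rw [hte]
    have key : 0 < ((4.506 * (1 + x + 2 * y) - 3.2) * 18 * x ^ 2 * y * (x + y)
      - 13.518 * x ^ 3 * y * (x + 3 * y)
      - 0.515 * (6 * x ^ 2 + 9 * x * y + 9 * y ^ 2) * (x + 3 * y) ^ 2) / (x * y * (x + 3 * y) ^ 3) :=
      div_pos hq (by positivity)
    refine lt_of_eq_of_lt (b := -(((4.506 * (1 + x + 2 * y) - 3.2) * 18 * x ^ 2 * y * (x + y)
      - 13.518 * x ^ 3 * y * (x + 3 * y)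
      - 0.515 * (6 * x ^ 2 + 9 * x * y + 9 * y ^ 2) * (x + 3 * y) ^ 2) / (x * y * (x + 3 * y) ^ 3))
      - 0.515 * z) ?_ (by linarith)
    push_cast
    field_simp
    ring
  have hanti : StrictAntiOn (fun t => Psi t β) (Set.Icc φ φ') := by
    apply strictAntiOn_of_deriv_neg (convex_Icc _ _)
    · intro t ht
      obtain ⟨d, _, hD⟩ := hd t ht
      exact hD.continuousAt.continuousWithinAt
    · intro t ht
      obtain ⟨d, hd0, hD⟩ := hd t (interior_subset ht)
      rw [hD.deriv]; exact hd0
  exact hanti (Set.left_mem_Icc.2 hφ.le) (Set.right_mem_Icc.2 hφ.le) hφ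

set_option linter.unusedSimpArgs false in
theorem Psi_beta {φ β β' : ℝ} (h : (φ, β) ∈ Dset) (h' : (φ, β') ∈ Dset) (hβ : β < β') :
    Psi φ β' < Psi φ β := by
  obtain ⟨a1, a2, a3, a4, a5, a6, a7, a8⟩ := h
  obtain ⟨b1, b2, b3, b4, b5, b6, b7, b8⟩ := h'
  simp only at a1 a2 a3 a4 a5 a6 a7 a8 b1 b2 b3 b4 b5 b6 b7 b8
  norm_num at a1 a2 a3 a4 a5 a6 a7 a8 b1 b2 b3 b4 b5 b6 b7 b8
  have hd : ∀ t ∈ Set.Icc β β', ∃ d < 0, HasDerivAt (fun t => Psi φ t) d t := by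
    intro t ht
    obtain ⟨t1, t2⟩ := ht
    have hx : 0.33018 ≤ 3 * (1 - φ) - 2 * t := by norm_num; linarith
    have hx0 : 0 < 3 * (1 - φ) - 2 * t := by linarith
    have hy : 0 < t - 2 + 3 * φ := by linarith
    have hM : 0 < 6 * φ - 3 + t := by linarith
    have hq := polyQb hx hy (by norm_num; linarith) (by norm_num; linarith)
    have dx : HasDerivAt (fun t : ℝ => 3 * (1 - φ) - 2 * t) (-2) t := by
      simpa using ((hasDerivAt_id t).const_mul 2).const_sub (3 * (1 - φ))
    have dy : HasDerivAt (fun t : ℝ => t - 2 + 3 * φ) 1 t := by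
      simpa using ((hasDerivAt_id t).sub_const 2).add_const (3 * φ)
    have dM : HasDerivAt (fun t : ℝ => 6 * φ - 3 + t) 1 t := by
      simpa using (hasDerivAt_id t).const_add (6 * φ - 3)
    have d1 : HasDerivAt (fun t : ℝ => -t * 4.506) (-1 * 4.506) t :=
      (hasDerivAt_id t).neg.mul_const 4.506
    have D := (d1.add (((dx.div dM hM.ne').pow 2).const_mul (13.518 * φ - 3.2))).add
      (((((dy.log hy.ne').const_mul 2).const_add (Real.log (1 - φ))).sub (dx.log hx0.ne')).sub
        ((dM.log hM.ne').const_mul 2) |>.const_mul 0.515)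
    refine ⟨_, ?_, D⟩
    obtain ⟨x, hxe⟩ : ∃ x, x = 3 * (1 - φ) - 2 * t := ⟨_, rfl⟩
    obtain ⟨y, hye⟩ : ∃ y, y = t - 2 + 3 * φ := ⟨_, rfl⟩
    have hMe : 6 * φ - 3 + t = x + 3 * y := by rw [hxe, hye]; ring
    have hte : φ = (1 + x + 2 * y) / 3 := by rw [hxe, hye]; ring
    rw [← hxe, ← hye] at hq
    simp only [Pi.div_apply, Pi.pow_apply]
    rw [hMe, ← hxe, ← hye]
    rw [← hxe] at hx0; rw [← hye] at hy
    rw [hte]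
    have key : 0 < (4.506 * (x + 3 * y) ^ 3 * x * y
      + (4.506 * (1 + x + 2 * y) - 3.2) * 6 * x ^ 2 * y * (x + 2 * y)
      - 0.515 * 2 * (x ^ 2 + 3 * x * y + 3 * y ^ 2) * (x + 3 * y) ^ 2) / (x * y * (x + 3 * y) ^ 3) :=
      div_pos hq (by positivity)
    refine lt_of_eq_of_lt (b := -((4.506 * (x + 3 * y) ^ 3 * x * y
      + (4.506 * (1 + x + 2 * y) - 3.2) * 6 * x ^ 2 * y * (x + 2 * y)
      - 0.515 * 2 * (x ^ 2 + 3 * x * y + 3 * y ^ 2) * (x + 3 * y) ^ 2) / (x * y * (x + 3 * y) ^ 3)))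
      ?_ (by linarith)
    push_cast
    field_simp
    ring
  have hanti : StrictAntiOn (fun t => Psi φ t) (Set.Icc β β') := by
    apply strictAntiOn_of_deriv_neg (convex_Icc _ _)
    · intro t ht
      obtain ⟨d, _, hD⟩ := hd t ht
      exact hD.continuousAt.continuousWithinAt
    · intro t ht
      obtain ⟨d, hd0, hD⟩ := hd t (interior_subset ht)
      rw [hD.deriv]; exact hd0
  exact hanti (Set.left_mem_Icc.2 hβ.le) (Set.right_mem_Icc.2 hβ.le) hβ

/-- separate strict monotonicity of the second equation: `Eq₂` strictly
decreases in each variable separately on `D`. -/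
theorem Eq2_separately_strictly_decreasing :
    (∀ φ β₁ β₁' : ℝ, (φ, β₁) ∈ Dset → (φ, β₁') ∈ Dset → β₁ < β₁' →
        Eq2 φ β₁' < Eq2 φ β₁) ∧
      (∀ φ φ' β₁ : ℝ, (φ, β₁) ∈ Dset → (φ', β₁) ∈ Dset → φ < φ' →
        Eq2 φ' β₁ < Eq2 φ β₁) := by
  constructor
  · intro φ β β' h h' hlt
    have h2 : φ ≤ 0.619063 := h.2.1
    norm_num at h2
    exact reduce h h' le_rfl hlt.le (by nlinarith) (Psi_beta h h' hlt)
  · intro φ φ' β h h' hlt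
    have h2 : 0.33018 ≤ β := h.2.2.1
    norm_num at h2
    exact reduce h h' hlt.le le_rfl (by nlinarith) (Psi_phi h h' hlt)
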